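/- Let A be a self-adjoint trace class operator on a real separable Hilbert space K = l²(Γ), and let ω_D be the centered Gaussian measure on ℝ^Γ with bounded strictly positive covariance D. Then the quadratic form q_A(x) = (x, A x) on K extends uniquely to an element of L¹(ω_D) with L¹-norm at most ‖D‖·‖A‖₁, and ∫ q_A dω_D = tr(D A). -/

import Mathlib

open MeasureTheory RealInnerProductSpace Filter

/-- `K = ℓ²(ℕ, ℝ)`. -/
noncomputable abbrev Ksp : Type := lp (fun _ : ℕ => ℝ) 2

/-- `μ` is the centered Gaussian measure on `ℝ^ℕ` with covariance `D`, expressed through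
its characteristic function on finitely supported `y`:
`∫ e^{i (y,x)} dμ(x) = e^{−(y, D y)/2}`. -/
def IsGaussianCov (μ : Measure (ℕ → ℝ)) (D : Ksp →L[ℝ] Ksp) : Prop :=
  ∀ (s : Finset ℕ) (c : ℕ → ℝ),
    ∫ x, Complex.exp (Complex.I * ((∑ n ∈ s, c n * x n : ℝ) : ℂ)) ∂μ =
      Complex.exp (-(((∑ n ∈ s, ∑ m ∈ s,
        c n * c m * ⟪lp.single 2 n (1 : ℝ), D (lp.single 2 m (1 : ℝ))⟫ : ℝ) : ℂ) / 2))

/-- The `N`-th cylinder approximation `(x_{[0,N)}, A x_{[0,N)}) = ∑_{n,m<N} A_{nm} x_n x_m`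
of the quadratic form of `A`. -/
noncomputable def cylQuadForm (A : Ksp →L[ℝ] Ksp) (N : ℕ) (x : ℕ → ℝ) : ℝ :=
  ∑ n ∈ Finset.range N, ∑ m ∈ Finset.range N,
    ⟪lp.single 2 n (1 : ℝ), A (lp.single 2 m (1 : ℝ))⟫ * x n * x m

/-!
Integrating against `μ` turns finitely supported vectors into Gaussian variables,
`c ↦ ∑ n, c n * x n`, whose second moment is `⟪c, D c⟫`; by density this extends to a bounded
operator `W : K → L²(μ)` with `W* W = D`. Hence `B y z = W y * W z` is a bounded bilinear map into
`L¹(μ)` with `‖B‖ ≤ ‖D‖` and `∫ B y z = ⟪y, D z⟫`. If `A = ∑ k, a k ⟪ψ k, ·⟫ φ k`, then the `N`-th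
cylinder approximation of `q_A` is `∑ k, a k B (P_N (ψ k)) (P_N (φ k))`, with `P_N` the projection
onto the first `N` coordinates, and it converges in `L¹` to `∑ k, a k B (ψ k) (φ k)` by dominated
convergence for series.
-/

open scoped Topology

section BilinearSeries

variable {κ X Y E : Type*} [NormedAddCommGroup X] [NormedSpace ℝ X]
  [NormedAddCommGroup Y] [NormedSpace ℝ Y] [NormedAddCommGroup E] [NormedSpace ℝ E]
  {a : κ → ℝ} {u : κ → X} {v : κ → Y} {r s : ℝ}

lemma norm_smul_apply_apply_le (B : X →L[ℝ] Y →L[ℝ] E) (c : ℝ) {x : X} {y : Y}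
    (hx : ‖x‖ ≤ r) (hy : ‖y‖ ≤ s) : ‖c • B x y‖ ≤ ‖B‖ * r * s * |c| := by
  rw [norm_smul, Real.norm_eq_abs, mul_comm]
  gcongr
  exact B.le_of_opNorm₂_le_of_le le_rfl hx hy

lemma norm_tsum_smul_apply_apply_le (B : X →L[ℝ] Y →L[ℝ] E) (ha : Summable fun k => |a k|)
    (hu : ∀ k, ‖u k‖ ≤ r) (hv : ∀ k, ‖v k‖ ≤ s) :
    ‖∑' k, a k • B (u k) (v k)‖ ≤ ‖B‖ * r * s * ∑' k, |a k| :=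
  tsum_of_norm_bounded (ha.hasSum.mul_left _) fun k =>
    norm_smul_apply_apply_le B (a k) (hu k) (hv k)

variable [CompleteSpace E]

lemma summable_smul_apply_apply (B : X →L[ℝ] Y →L[ℝ] E) (ha : Summable fun k => |a k|)
    (hu : ∀ k, ‖u k‖ ≤ r) (hv : ∀ k, ‖v k‖ ≤ s) : Summable fun k => a k • B (u k) (v k) :=
  .of_norm_bounded (ha.mul_left _) fun k => norm_smul_apply_apply_le B (a k) (hu k) (hv k)

lemma tendsto_tsum_smul_apply_apply {ι : Type*} {l : Filter ι} (B : X →L[ℝ] Y →L[ℝ] E)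
    (ha : Summable fun k => |a k|) {f : ι → κ → X} {g : ι → κ → Y}
    (hf : ∀ i k, ‖f i k‖ ≤ r) (hg : ∀ i k, ‖g i k‖ ≤ s)
    (hfu : ∀ k, Tendsto (fun i => f i k) l (𝓝 (u k)))
    (hgv : ∀ k, Tendsto (fun i => g i k) l (𝓝 (v k))) :
    Tendsto (fun i => ∑' k, a k • B (f i k) (g i k)) l (𝓝 (∑' k, a k • B (u k) (v k))) := by
  refine tendsto_tsum_of_dominated_convergence (ha.mul_left (‖B‖ * r * s)) (fun k => ?_)
    (.of_forall fun i k => norm_smul_apply_apply_le B (a k) (hf i k) (hg i k))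
  exact (B.continuous₂.tendsto (u k, v k) |>.comp ((hfu k).prodMk_nhds (hgv k))).const_smul (a k)

end BilinearSeries

section NuclearOperator

variable {κ H E : Type*} [NormedAddCommGroup H] [InnerProductSpace ℝ H] [CompleteSpace H]
  [NormedAddCommGroup E] [NormedSpace ℝ E] {a : κ → ℝ} {φ ψ : κ → H} {r s : ℝ} {A : H → H}

lemma hasSum_mul_inner_mul_inner (ha : Summable fun k => |a k|) (hψ : ∀ k, ‖ψ k‖ ≤ r)
    (hφ : ∀ k, ‖φ k‖ ≤ s) (hA : ∀ x, A x = ∑' k, (a k * ⟪ψ k, x⟫) • φ k) (x y : H) :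
    HasSum (fun k => a k * ⟪ψ k, x⟫ * ⟪y, φ k⟫) ⟪y, A x⟫ := by
  have hsum : Summable fun k => (a k * ⟪ψ k, x⟫) • φ k := by
    simpa [mul_smul, real_inner_comm] using summable_smul_apply_apply
      ((ContinuousLinearMap.lsmul ℝ ℝ).bilinearComp (innerSL ℝ x) (.id ℝ H)) ha hψ hφ
  have h := hsum.hasSum.mapL (innerSL ℝ y)
  simpa only [← hA, innerSL_apply_apply, real_inner_smul_right] using h

lemma sum_inner_smul_apply_apply_eq_tsum (B : H →L[ℝ] H →L[ℝ] E) (ha : Summable fun k => |a k|)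
    (hψ : ∀ k, ‖ψ k‖ ≤ r) (hφ : ∀ k, ‖φ k‖ ≤ s)
    (hA : ∀ x, A x = ∑' k, (a k * ⟪ψ k, x⟫) • φ k) (b : HilbertBasis ℕ ℝ H) (N : ℕ) :
    ∑ n ∈ Finset.range N, ∑ m ∈ Finset.range N, ⟪b n, A (b m)⟫ • B (b m) (b n) =
      ∑' k, a k • B (b.toSchauderBasis.proj N (ψ k)) (b.toSchauderBasis.proj N (φ k)) := by
  have hterm (k : κ) :
      a k • B (b.toSchauderBasis.proj N (ψ k)) (b.toSchauderBasis.proj N (φ k)) =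
        ∑ n ∈ Finset.range N, ∑ m ∈ Finset.range N,
          (a k * ⟪ψ k, b m⟫ * ⟪b n, φ k⟫) • B (b m) (b n) := by
    simp [SchauderBasis.proj_apply, Finset.smul_sum, smul_smul, real_inner_comm, mul_comm,
      mul_left_comm]
  simp only [hterm]
  refine (hasSum_sum fun n _ => hasSum_sum fun m _ => ?_).tsum_eq.symm
  exact (hasSum_mul_inner_mul_inner ha hψ hφ hA (b m) (b n)).smul_const _

lemma tendsto_sum_inner_smul_apply_apply [CompleteSpace E] (B : H →L[ℝ] H →L[ℝ] E)
    (ha : Summable fun k => |a k|) (hψ : ∀ k, ‖ψ k‖ ≤ r) (hφ : ∀ k, ‖φ k‖ ≤ s)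
    (hA : ∀ x, A x = ∑' k, (a k * ⟪ψ k, x⟫) • φ k) (b : HilbertBasis ℕ ℝ H) :
    Tendsto
      (fun N => ∑ n ∈ Finset.range N, ∑ m ∈ Finset.range N, ⟪b n, A (b m)⟫ • B (b m) (b n))
      atTop (𝓝 (∑' k, a k • B (ψ k) (φ k))) := by
  obtain ⟨C, hC⟩ := b.toSchauderBasis.exists_norm_proj_le
  simp only [sum_inner_smul_apply_apply_eq_tsum B ha hψ hφ hA]
  exact tendsto_tsum_smul_apply_apply B ha
    (fun N k => (b.toSchauderBasis.proj N).le_of_opNorm_le_of_le (hC N) (hψ k))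
    (fun N k => (b.toSchauderBasis.proj N).le_of_opNorm_le_of_le (hC N) (hφ k))
    (fun k => b.toSchauderBasis.tendsto_proj (ψ k)) fun k => b.toSchauderBasis.tendsto_proj (φ k)

end NuclearOperator

lemma coeFn_finsetSum_congr {α ι E : Type*} [MeasurableSpace α] {μ : Measure α}
    [NormedAddCommGroup E] {p : ENNReal} {s : Finset ι} {F : ι → Lp E p μ} {f : ι → α → E}
    (hF : ∀ i ∈ s, F i =ᵐ[μ] f i) : ⇑(∑ i ∈ s, F i) =ᵐ[μ] fun x => ∑ i ∈ s, f i x := by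
  filter_upwards [Lp.coeFn_fun_finsetSum s F, (s.eventually_all).2 hF] with x hsum hx
  rw [hsum]
  exact Finset.sum_congr rfl hx

lemma integral_coeFn_tsum {α κ E : Type*} [MeasurableSpace α] {μ : Measure α}
    [NormedAddCommGroup E] [NormedSpace ℝ E] [CompleteSpace E] {f : κ → α →₁[μ] E}
    (hf : Summable f) : ∫ x, (∑' k, f k : α →₁[μ] E) x ∂μ = ∑' k, ∫ x, f k x ∂μ := by
  simpa only [← L1.integral_eq, L1.integral_eq_integral] using
    (L1.integralCLM (α := α) (E := E) (μ := μ)).map_tsum hf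

lemma tendsto_integral_abs_sub_iff_tendsto_toL1 {α ι : Type*} [MeasurableSpace α] {μ : Measure α}
    {l : Filter ι} {F : ι → α →₁[μ] ℝ} {f : ι → α → ℝ} (hF : ∀ i, F i =ᵐ[μ] f i) {q : α → ℝ}
    (hq : Integrable q μ) :
    Tendsto (fun i => ∫ x, |q x - f i x| ∂μ) l (𝓝 0) ↔ Tendsto F l (𝓝 (hq.toL1 q)) := by
  have hdist (i : ι) : dist (F i) (hq.toL1 q) = ∫ x, |q x - f i x| ∂μ := by
    rw [dist_comm, L1.dist_eq_integral_dist]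
    refine integral_congr_ae ?_
    filter_upwards [hF i, hq.coeFn_toL1] with x hFx hqx
    rw [hFx, hqx, Real.dist_eq]
  simp only [tendsto_iff_dist_tendsto_zero (f := F), hdist]

/-- The standard Hilbert basis of `ℓ²(ℕ)`. -/
noncomputable def stdHilbertBasis : HilbertBasis ℕ ℝ Ksp :=
  .ofRepr (.refl ℝ Ksp)

lemma stdHilbertBasis_apply (n : ℕ) : stdHilbertBasis n = lp.single 2 n (1 : ℝ) := by
  rw [← stdHilbertBasis.repr_symm_single]
  rfl

/-- The inclusion of the finitely supported sequences into `ℓ²(ℕ)`. -/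
noncomputable def finsuppToKsp : (ℕ →₀ ℝ) →ₗ[ℝ] Ksp :=
  Finsupp.linearCombination ℝ stdHilbertBasis

lemma finsuppToKsp_single_one (n : ℕ) :
    finsuppToKsp (Finsupp.single n 1) = stdHilbertBasis n := by
  simp [finsuppToKsp]

lemma denseRange_finsuppToKsp : DenseRange finsuppToKsp := by
  have h := Submodule.dense_iff_topologicalClosure_eq_top.2 stdHilbertBasis.dense_span
  rwa [← Finsupp.range_linearCombination, LinearMap.coe_range] at h

lemma measurable_linearCombination (c : ℕ →₀ ℝ) :
    Measurable fun x : ℕ → ℝ => Finsupp.linearCombination ℝ x c := by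
  simp only [Finsupp.linearCombination_apply, Finsupp.sum]
  fun_prop

namespace IsGaussianCov

variable {μ : Measure (ℕ → ℝ)} {D : Ksp →L[ℝ] Ksp}

lemma integral_cexp_linearCombination (h : IsGaussianCov μ D) (c : ℕ →₀ ℝ) :
    ∫ x, Complex.exp (Complex.I * (Finsupp.linearCombination ℝ x c : ℝ)) ∂μ =
      Complex.exp (-((⟪finsuppToKsp c, D (finsuppToKsp c)⟫ : ℝ) / 2)) := by
  have hcov : ⟪finsuppToKsp c, D (finsuppToKsp c)⟫ = ∑ n ∈ c.support, ∑ m ∈ c.support,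
      c n * c m * ⟪lp.single 2 n (1 : ℝ), D (lp.single 2 m (1 : ℝ))⟫ := by
    simp only [finsuppToKsp, Finsupp.linearCombination_apply, Finsupp.sum, stdHilbertBasis_apply,
      map_sum, map_smul, sum_inner, real_inner_smul_left]
    simp only [inner_sum, real_inner_smul_right, Finset.mul_sum, mul_assoc]
  rw [hcov]
  exact h c.support c

variable [IsProbabilityMeasure μ]

lemma inner_finsuppToKsp_nonneg (h : IsGaussianCov μ D) (c : ℕ →₀ ℝ) :
    0 ≤ ⟪finsuppToKsp c, D (finsuppToKsp c)⟫ := by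
  have hle := norm_integral_le_of_norm_le_const (μ := μ) (C := 1)
    (f := fun x => Complex.exp (Complex.I * (Finsupp.linearCombination ℝ x c : ℝ)))
    (.of_forall fun x => (Complex.norm_exp_I_mul_ofReal _).le)
  rw [h.integral_cexp_linearCombination, Complex.norm_exp, probReal_univ, mul_one,
    Real.exp_le_one_iff] at hle
  norm_cast at hle
  linarith

lemma map_linearCombination_eq_gaussianReal (h : IsGaussianCov μ D) (c : ℕ →₀ ℝ) :
    μ.map (fun x => Finsupp.linearCombination ℝ x c) =
      ProbabilityTheory.gaussianReal 0 ⟪finsuppToKsp c, D (finsuppToKsp c)⟫.toNNReal := by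
  have hm := measurable_linearCombination c
  have := Measure.isProbabilityMeasure_map (μ := μ) hm.aemeasurable
  refine Measure.ext_of_charFun (funext fun t => ?_)
  rw [charFun_apply_real, integral_map hm.aemeasurable (by fun_prop),
    ProbabilityTheory.charFun_gaussianReal, Real.coe_toNNReal _ (h.inner_finsuppToKsp_nonneg c)]
  convert h.integral_cexp_linearCombination (t • c) using 2
  · funext x
    simp [mul_comm]
  · simp only [map_smul, real_inner_smul_left, real_inner_smul_right]
    push_cast
    ring

lemma memLp_linearCombination (h : IsGaussianCov μ D) (c : ℕ →₀ ℝ) :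
    MemLp (fun x => Finsupp.linearCombination ℝ x c) 2 μ := by
  have hm := (measurable_linearCombination c).aemeasurable (μ := μ)
  refine (memLp_map_measure_iff aestronglyMeasurable_id hm).1 ?_
  rw [h.map_linearCombination_eq_gaussianReal]
  exact ProbabilityTheory.memLp_id_gaussianReal 2

lemma integral_linearCombination_sq (h : IsGaussianCov μ D) (c : ℕ →₀ ℝ) :
    ∫ x, Finsupp.linearCombination ℝ x c ^ 2 ∂μ = ⟪finsuppToKsp c, D (finsuppToKsp c)⟫ := by
  have hvar := ProbabilityTheory.variance_fun_id_gaussianReal (μ := 0)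
    (v := ⟪finsuppToKsp c, D (finsuppToKsp c)⟫.toNNReal)
  rwa [ProbabilityTheory.variance_of_integral_eq_zero (by fun_prop)
    ProbabilityTheory.integral_id_gaussianReal, ← h.map_linearCombination_eq_gaussianReal,
    integral_map (measurable_linearCombination c).aemeasurable (by fun_prop),
    Real.coe_toNNReal _ (h.inner_finsuppToKsp_nonneg c)] at hvar

/-- The cylinder variable `x ↦ ∑ n, c n * x n` as an element of `L²(μ)`, for `c` finitely
supported. -/
noncomputable def cylinderL2 (h : IsGaussianCov μ D) : (ℕ →₀ ℝ) →ₗ[ℝ] Lp ℝ 2 μ where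
  toFun c := (h.memLp_linearCombination c).toLp
  map_add' c d := by simp only [map_add]; rfl
  map_smul' r c := by simp only [map_smul]; rfl

lemma coeFn_cylinderL2 (h : IsGaussianCov μ D) (c : ℕ →₀ ℝ) :
    h.cylinderL2 c =ᵐ[μ] fun x => Finsupp.linearCombination ℝ x c :=
  (h.memLp_linearCombination c).coeFn_toLp

lemma inner_cylinderL2_self (h : IsGaussianCov μ D) (c : ℕ →₀ ℝ) :
    ⟪h.cylinderL2 c, h.cylinderL2 c⟫ = ⟪finsuppToKsp c, D (finsuppToKsp c)⟫ := by
  rw [← h.integral_linearCombination_sq, L2.inner_def]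
  refine integral_congr_ae ?_
  filter_upwards [h.coeFn_cylinderL2 c] with x hx
  simp [hx, sq]

lemma norm_cylinderL2_le (h : IsGaussianCov μ D) (c : ℕ →₀ ℝ) :
    ‖h.cylinderL2 c‖ ≤ √‖D‖ * ‖finsuppToKsp c‖ := by
  refine le_of_sq_le_sq ?_ (by positivity)
  calc ‖h.cylinderL2 c‖ ^ 2 = ⟪finsuppToKsp c, D (finsuppToKsp c)⟫ := by
        rw [← real_inner_self_eq_norm_sq, h.inner_cylinderL2_self]
    _ ≤ ‖finsuppToKsp c‖ * (‖D‖ * ‖finsuppToKsp c‖) :=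
        (real_inner_le_norm _ _).trans (by gcongr; exact D.le_opNorm _)
    _ = (√‖D‖ * ‖finsuppToKsp c‖) ^ 2 := by
        rw [mul_pow, Real.sq_sqrt (norm_nonneg D)]; ring

/-- The isonormal process of `μ`: the extension of `c ↦ ∑ n, c n * x n` to a bounded operator
`ℓ²(ℕ) → L²(μ)`. -/
noncomputable def isonormal (h : IsGaussianCov μ D) : Ksp →L[ℝ] Lp ℝ 2 μ :=
  h.cylinderL2.extendOfNorm finsuppToKsp

lemma isonormal_finsuppToKsp (h : IsGaussianCov μ D) (c : ℕ →₀ ℝ) :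
    h.isonormal (finsuppToKsp c) = h.cylinderL2 c :=
  LinearMap.extendOfNorm_eq denseRange_finsuppToKsp ⟨_, h.norm_cylinderL2_le⟩ c

lemma coeFn_isonormal_stdHilbertBasis (h : IsGaussianCov μ D) (n : ℕ) :
    h.isonormal (stdHilbertBasis n) =ᵐ[μ] fun x => x n := by
  rw [← finsuppToKsp_single_one, h.isonormal_finsuppToKsp]
  simpa only [Finsupp.linearCombination_single, one_smul] using
    h.coeFn_cylinderL2 (Finsupp.single n 1)

lemma inner_isonormal_self (h : IsGaussianCov μ D) (y : Ksp) :
    ⟪h.isonormal y, h.isonormal y⟫ = ⟪y, D y⟫ := by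
  have hclosed : IsClosed {y | ⟪h.isonormal y, h.isonormal y⟫ = ⟪y, D y⟫} :=
    isClosed_eq (by fun_prop) (by fun_prop)
  refine denseRange_finsuppToKsp.induction_on y hclosed fun c => ?_
  rw [h.isonormal_finsuppToKsp, h.inner_cylinderL2_self]

lemma adjoint_isonormal_comp_isonormal (h : IsGaussianCov μ D) (hD : IsSelfAdjoint D) :
    h.isonormal.adjoint ∘L h.isonormal = D := by
  set T := h.isonormal.adjoint ∘L h.isonormal - D with hT
  have hsymm : (T : Ksp →ₗ[ℝ] Ksp).IsSymmetric := fun y z => by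
    have hDyz : ⟪D y, z⟫ = ⟪y, D z⟫ := hD.isSymmetric y z
    simp only [hT, ContinuousLinearMap.coe_coe, sub_apply, ContinuousLinearMap.comp_apply,
      inner_sub_left, inner_sub_right, ContinuousLinearMap.adjoint_inner_left,
      ContinuousLinearMap.adjoint_inner_right, hDyz]
  have hdiag (y : Ksp) : ⟪(T : Ksp →ₗ[ℝ] Ksp) y, y⟫ = 0 := by
    simp only [hT, ContinuousLinearMap.coe_coe, sub_apply, ContinuousLinearMap.comp_apply,
      inner_sub_left, ContinuousLinearMap.adjoint_inner_left, h.inner_isonormal_self,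
      real_inner_comm, sub_self]
  have hzero : T = 0 := ContinuousLinearMap.coe_injective (hsymm.inner_map_self_eq_zero.1 hdiag)
  exact sub_eq_zero.1 hzero

lemma norm_isonormal_mul_self (h : IsGaussianCov μ D) (hD : IsSelfAdjoint D) :
    ‖h.isonormal‖ * ‖h.isonormal‖ = ‖D‖ := by
  rw [← ContinuousLinearMap.norm_adjoint_comp_self, h.adjoint_isonormal_comp_isonormal hD]

/-- The bounded bilinear map `(y, z) ↦ W y * W z` into `L¹(μ)`, with `W` the isonormal process. -/
noncomputable def isonormalMul (h : IsGaussianCov μ D) : Ksp →L[ℝ] Ksp →L[ℝ] Lp ℝ 1 μ :=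
  ((ContinuousLinearMap.mul ℝ ℝ).holderL μ 2 2 1).bilinearComp h.isonormal h.isonormal

lemma coeFn_isonormalMul (h : IsGaussianCov μ D) (y z : Ksp) :
    h.isonormalMul y z =ᵐ[μ] fun x => h.isonormal y x * h.isonormal z x :=
  (ContinuousLinearMap.mul ℝ ℝ).coeFn_holder (h.isonormal y) (h.isonormal z)

lemma norm_isonormalMul_le (h : IsGaussianCov μ D) (hD : IsSelfAdjoint D) :
    ‖h.isonormalMul‖ ≤ ‖D‖ := by
  refine ContinuousLinearMap.opNorm_le_bound₂ _ (norm_nonneg D) fun y z => ?_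
  calc ‖h.isonormalMul y z‖
      ≤ ‖ContinuousLinearMap.mul ℝ ℝ‖ * ‖h.isonormal y‖ * ‖h.isonormal z‖ :=
        (ContinuousLinearMap.mul ℝ ℝ).norm_holder_apply_apply_le _ _
    _ ≤ 1 * (‖h.isonormal‖ * ‖y‖) * (‖h.isonormal‖ * ‖z‖) := by
        gcongr
        · exact ContinuousLinearMap.opNorm_mul_le ℝ ℝ
        · exact h.isonormal.le_opNorm y
        · exact h.isonormal.le_opNorm z
    _ = ‖D‖ * ‖y‖ * ‖z‖ := by rw [← h.norm_isonormal_mul_self hD]; ring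

lemma integral_isonormalMul (h : IsGaussianCov μ D) (hD : IsSelfAdjoint D) (y z : Ksp) :
    ∫ x, h.isonormalMul y z x ∂μ = ⟪y, D z⟫ := by
  calc ∫ x, h.isonormalMul y z x ∂μ = ⟪h.isonormal y, h.isonormal z⟫ := by
        rw [L2.inner_def]
        refine integral_congr_ae ?_
        filter_upwards [h.coeFn_isonormalMul y z] with x hx
        simpa [mul_comm] using hx
    _ = ⟪y, D z⟫ := by
        rw [← ContinuousLinearMap.adjoint_inner_right, ← ContinuousLinearMap.comp_apply,
          h.adjoint_isonormal_comp_isonormal hD]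

lemma coeFn_isonormalMul_stdHilbertBasis (h : IsGaussianCov μ D) (n m : ℕ) :
    h.isonormalMul (stdHilbertBasis n) (stdHilbertBasis m) =ᵐ[μ] fun x => x n * x m := by
  filter_upwards [h.coeFn_isonormalMul (stdHilbertBasis n) (stdHilbertBasis m),
    h.coeFn_isonormal_stdHilbertBasis n, h.coeFn_isonormal_stdHilbertBasis m] with x hx hn hm
  rw [hx, hn, hm]

lemma coeFn_sum_smul_isonormalMul (h : IsGaussianCov μ D) (A : Ksp →L[ℝ] Ksp) (N : ℕ) :
    (∑ n ∈ Finset.range N, ∑ m ∈ Finset.range N,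
      ⟪stdHilbertBasis n, A (stdHilbertBasis m)⟫ •
        h.isonormalMul (stdHilbertBasis m) (stdHilbertBasis n) : Lp ℝ 1 μ) =ᵐ[μ]
      cylQuadForm A N := by
  have hterm (n m : ℕ) : (⟪stdHilbertBasis n, A (stdHilbertBasis m)⟫ •
      h.isonormalMul (stdHilbertBasis m) (stdHilbertBasis n) : Lp ℝ 1 μ) =ᵐ[μ]
        fun x => ⟪lp.single 2 n (1 : ℝ), A (lp.single 2 m (1 : ℝ))⟫ * x n * x m := by
    filter_upwards [Lp.coeFn_smul ⟪stdHilbertBasis n, A (stdHilbertBasis m)⟫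
      (h.isonormalMul (stdHilbertBasis m) (stdHilbertBasis n)),
      h.coeFn_isonormalMul_stdHilbertBasis m n] with x hsmul hmul
    rw [hsmul, Pi.smul_apply, hmul, smul_eq_mul, stdHilbertBasis_apply, stdHilbertBasis_apply]
    ring
  exact coeFn_finsetSum_congr fun n _ => coeFn_finsetSum_congr fun m _ => hterm n m

end IsGaussianCov

theorem stmt0_general (μ : Measure (ℕ → ℝ)) [IsProbabilityMeasure μ]
    (D : Ksp →L[ℝ] Ksp) (hD : IsSelfAdjoint D) (hgauss : IsGaussianCov μ D)
    (A : Ksp →L[ℝ] Ksp) (a : ℕ → ℝ) (φ ψ : ℕ → Ksp)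
    (hφ : ∀ k, ‖φ k‖ ≤ 1) (hψ : ∀ k, ‖ψ k‖ ≤ 1) (hsum : Summable fun k => |a k|)
    (hA : ∀ x : Ksp, A x = ∑' k, (a k * ⟪ψ k, x⟫) • φ k) :
    ∃ q : (ℕ → ℝ) → ℝ, Integrable q μ ∧
      Tendsto (fun N => ∫ x, |q x - cylQuadForm A N x| ∂μ) atTop (nhds 0) ∧
      (∫ x, |q x| ∂μ) ≤ ‖D‖ * ∑' k, |a k| ∧
      (∫ x, q x ∂μ) = ∑' k, a k * ⟪ψ k, D (φ k)⟫ ∧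
      ∀ q' : (ℕ → ℝ) → ℝ, Integrable q' μ →
        Tendsto (fun N => ∫ x, |q' x - cylQuadForm A N x| ∂μ) atTop (nhds 0) →
        q' =ᵐ[μ] q := by
  set B := hgauss.isonormalMul
  set G : Lp ℝ 1 μ := ∑' k, a k • B (ψ k) (φ k)
  have hcyl := hgauss.coeFn_sum_smul_isonormalMul A
  have hlim : Tendsto _ atTop (𝓝 G) :=
    tendsto_sum_inner_smul_apply_apply B hsum hψ hφ hA stdHilbertBasis
  refine ⟨G, L1.integrable_coeFn G, ?_, ?_, ?_, fun q' hq' hq'_lim => ?_⟩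
  · rwa [tendsto_integral_abs_sub_iff_tendsto_toL1 hcyl (L1.integrable_coeFn G),
      Integrable.toL1_coeFn]
  · calc ∫ x, |G x| ∂μ = ‖G‖ := (L1.norm_eq_integral_norm G).symm
      _ ≤ ‖B‖ * 1 * 1 * ∑' k, |a k| := norm_tsum_smul_apply_apply_le B hsum hψ hφ
      _ ≤ ‖D‖ * ∑' k, |a k| := by
        rw [mul_one, mul_one]
        gcongr
        exact hgauss.norm_isonormalMul_le hD
  · rw [integral_coeFn_tsum (summable_smul_apply_apply B hsum hψ hφ)]
    refine tsum_congr fun k => ?_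
    rw [integral_congr_ae (Lp.coeFn_smul _ _)]
    simp only [Pi.smul_apply, smul_eq_mul, integral_const_mul, B, hgauss.integral_isonormalMul hD]
  · rw [tendsto_integral_abs_sub_iff_tendsto_toL1 hcyl hq'] at hq'_lim
    rw [← tendsto_nhds_unique hq'_lim hlim]
    exact hq'.coeFn_toL1.symm

/-- Let `A` be a self-adjoint trace class operator on `K = ℓ²(ℕ)`
(encoded by its spectral representation: an orthonormal family `φ` and a summable
eigenvalue sequence `a`, so that `‖A‖₁ = ∑ |a_k|` and `tr(D A) = ∑ a_k (φ_k, D φ_k)`),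
and let `ω_D` be the centered Gaussian measure on `ℝ^ℕ` with bounded strictly positive
covariance `D`.  Then the quadratic form `q_A(x) = (x, A x)` extends uniquely (as the
`L¹(ω_D)`-limit of its cylinder approximations) to an element `q` of `L¹(ω_D)`, with
`‖q‖₁ ≤ ‖D‖ ‖A‖₁` and `∫ q dω_D = tr(D A)`. -/
theorem stmt0 (μ : Measure (ℕ → ℝ)) [IsProbabilityMeasure μ]
    (D : Ksp →L[ℝ] Ksp) (hD : IsSelfAdjoint D)
    (hDpos : ∃ c > 0, ∀ y : Ksp, c * ‖y‖ ^ 2 ≤ ⟪y, D y⟫)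
    (hgauss : IsGaussianCov μ D)
    (A : Ksp →L[ℝ] Ksp) (a : ℕ → ℝ) (φ : ℕ → Ksp) (horth : Orthonormal ℝ φ)
    (hsum : Summable fun k => |a k|)
    (hA : ∀ x : Ksp, A x = ∑' k, (a k * ⟪φ k, x⟫) • φ k) :
    ∃ q : (ℕ → ℝ) → ℝ, Integrable q μ ∧
      Tendsto (fun N => ∫ x, |q x - cylQuadForm A N x| ∂μ) atTop (nhds 0) ∧
      (∫ x, |q x| ∂μ) ≤ ‖D‖ * ∑' k, |a k| ∧
      (∫ x, q x ∂μ) = ∑' k, a k * ⟪φ k, D (φ k)⟫ ∧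
      ∀ q' : (ℕ → ℝ) → ℝ, Integrable q' μ →
        Tendsto (fun N => ∫ x, |q' x - cylQuadForm A N x| ∂μ) atTop (nhds 0) →
        q' =ᵐ[μ] q := by
  exact stmt0_general μ D hD hgauss A a φ φ (fun k => (horth.1 k).le) (fun k => (horth.1 k).le)
    hsum hA
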